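/- For every n ≥ 2, there is an injective group homomorphism from the braid group B_n on n strings into GL(n(n−1)/2, ℤ[q^{±1}, t^{±1}]), the group of invertible matrices of size n(n−1)/2 over the ring of Laurent polynomials in two variables q, t with integer coefficients. -/

import Mathlib

/-- The braid relations on `n` strings. -/
def braidRels (n : ℕ) : Set (FreeGroup (Fin (n - 1))) :=
  {r | (∃ i j : Fin (n - 1), (i : ℕ) + 2 ≤ (j : ℕ) ∧
          r = FreeGroup.of i * FreeGroup.of j * (FreeGroup.of i)⁻¹ * (FreeGroup.of j)⁻¹) ∨
       (∃ i j : Fin (n - 1), (j : ℕ) = (i : ℕ) + 1 ∧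
          r = FreeGroup.of i * FreeGroup.of j * FreeGroup.of i *
              (FreeGroup.of j * FreeGroup.of i * FreeGroup.of j)⁻¹)}

/-- The braid group `B_n` on `n` strings. -/
def BraidGroup (n : ℕ) : Type :=
  PresentedGroup (braidRels n)

instance (n : ℕ) : Group (BraidGroup n) := by
  unfold BraidGroup; infer_instance

/-- The ring `ℤ[q^{±1}, t^{±1}]` of Laurent polynomials in two commuting variables
with integer coefficients, realized as the monoid algebra of `ℤ × ℤ` over `ℤ`
(the monomial `q^a t^b` corresponds to the point `(a, b)`). -/
def LaurentPoly2 : Type :=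
  AddMonoidAlgebra ℤ (ℤ × ℤ)

noncomputable instance : CommRing LaurentPoly2 := by
  unfold LaurentPoly2; infer_instance

/-!
The matrices are those of the Lawrence–Krammer representation. Its generators are defined over
`ℤ[q, t]`, so the positive braids act over every commutative ring, even where `q` or `t` is not
invertible. At `t = 0` and `0 < q < 1` (Krammer's specialization) the generators become nonnegative
matrices and `σ_i` kills the basis vector `e_{i,i+1}`. Conversely, nonnegativity rules out
cancellations, which shows by induction on the length that a positive braid killing `e_{i,i+1}` is
a right multiple of `σ_i`. Hence the matrix of a positive braid over `ℤ[q, t]` determines its last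
letter, and cancelling letters shows that it determines the braid. Every braid is a quotient of
positive ones, because a power of `σ_1 ⋯ σ_{n-1}` is central and divisible by every generator, so
the representation of the braid group over `ℤ[q^{±1}, t^{±1}]` is faithful.
-/

/-! ### Braid relations -/

/-- A family of elements of a monoid satisfying the defining relations of the braid group on
`N + 1` strings. -/
structure IsBraidFamily {M : Type*} [Monoid M] {N : ℕ} (s : Fin N → M) : Prop where
  commute : ∀ i j : Fin N, (i : ℕ) + 2 ≤ j → Commute (s i) (s j)
  braid : ∀ i j : Fin N, (j : ℕ) = i + 1 → s i * s j * s i = s j * s i * s j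

/-- The relations of `braidRels n`, as relations between positive words. -/
inductive BraidMonoid.Rel (n : ℕ) : FreeMonoid (Fin (n - 1)) → FreeMonoid (Fin (n - 1)) → Prop
  | commute (i j : Fin (n - 1)) (h : (i : ℕ) + 2 ≤ j) :
      Rel n (.of i * .of j) (.of j * .of i)
  | braid (i j : Fin (n - 1)) (h : (j : ℕ) = i + 1) :
      Rel n (.of i * .of j * .of i) (.of j * .of i * .of j)

/-- The monoid of positive braids on `n` strings. -/
abbrev BraidMonoid (n : ℕ) : Type :=
  PresentedMonoid (BraidMonoid.Rel n)

namespace BraidMonoid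

variable {n : ℕ} {M : Type*} [Monoid M]

/-- The elementary positive braid `σ_i`, with `i` counted from `0`. -/
def gen (i : Fin (n - 1)) : BraidMonoid n :=
  PresentedMonoid.of (Rel n) i

lemma isBraidFamily_gen : IsBraidFamily (gen (n := n)) where
  commute i j h := PresentedMonoid.mk_eq_mk_of_rel (.commute i j h)
  braid i j h := PresentedMonoid.mk_eq_mk_of_rel (.braid i j h)

/-- The homomorphism out of the monoid of positive braids given by a braid family. -/
def lift {s : Fin (n - 1) → M} (hs : IsBraidFamily s) : BraidMonoid n →* M :=
  PresentedMonoid.lift s fun a b hab => by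
    cases hab with
    | commute i j h => simpa using (hs.commute i j h).eq
    | braid i j h => simpa using hs.braid i j h

@[simp]
lemma lift_gen {s : Fin (n - 1) → M} (hs : IsBraidFamily s) (i : Fin (n - 1)) :
    lift hs (gen i) = s i :=
  rfl

@[elab_as_elim]
lemma induction_right {p : BraidMonoid n → Prop} (x : BraidMonoid n) (one : p 1)
    (mul_gen : ∀ x i, p x → p (x * gen i)) : p x := by
  have hx : x ∈ Submonoid.closure (Set.range gen) :=
    (PresentedMonoid.closure_range_of (Rel n)).symm ▸ Submonoid.mem_top x
  induction hx using Submonoid.closure_induction_right with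
  | one => exact one
  | mul_right x _ y hy ih =>
    obtain ⟨i, rfl⟩ := hy
    exact mul_gen x i ih

/-- The number of letters of any word representing a positive braid. -/
def length (x : BraidMonoid n) : ℕ :=
  (lift (s := fun _ => Multiplicative.ofAdd 1) ⟨fun _ _ _ => rfl, fun _ _ _ => rfl⟩ x).toAdd

lemma length_mul_gen (x : BraidMonoid n) (i : Fin (n - 1)) :
    length (x * gen i) = length x + 1 := by
  simp [length]

end BraidMonoid

namespace BraidGroup

variable {n : ℕ} {H : Type*} [Group H]

/-- The elementary braid `σ_i`, with `i` counted from `0`. -/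
def gen (i : Fin (n - 1)) : BraidGroup n :=
  PresentedGroup.of (rels := braidRels n) i

lemma isBraidFamily_gen : IsBraidFamily (gen (n := n)) where
  commute i j h := by
    have hrel : gen i * gen j * (gen i)⁻¹ * (gen j)⁻¹ = 1 :=
      PresentedGroup.one_of_mem (rels := braidRels n) (Or.inl ⟨i, j, h, rfl⟩)
    rwa [mul_inv_eq_one, mul_inv_eq_iff_eq_mul] at hrel
  braid i j h :=
    mul_inv_eq_one.mp
      (PresentedGroup.one_of_mem (rels := braidRels n) (Or.inr ⟨i, j, h, rfl⟩))

/-- The homomorphism out of the braid group given by a braid family. -/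
def lift {s : Fin (n - 1) → H} (hs : IsBraidFamily s) : BraidGroup n →* H :=
  PresentedGroup.toGroup (rels := braidRels n) (f := s) (by
    rintro r (⟨i, j, h, rfl⟩ | ⟨i, j, h, rfl⟩)
    · simp [(hs.commute i j h).eq]
    · simp only [map_mul, map_inv, FreeGroup.lift_apply_of]
      rw [hs.braid i j h, mul_inv_cancel])

@[simp]
lemma lift_gen {s : Fin (n - 1) → H} (hs : IsBraidFamily s) (i : Fin (n - 1)) :
    lift hs (gen i) = s i :=
  PresentedGroup.toGroup.of _

lemma closure_range_gen (n : ℕ) : Subgroup.closure (Set.range (gen (n := n))) = ⊤ :=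
  PresentedGroup.closure_range_of (braidRels n)

end BraidGroup

/-- The braid represented by a positive braid. -/
def BraidMonoid.toBraidGroup (n : ℕ) : BraidMonoid n →* BraidGroup n :=
  lift BraidGroup.isBraidFamily_gen

/-! ### Braids as quotients of positive braids -/

namespace IsBraidFamily

open Fin

variable {M : Type*} [Monoid M] {N : ℕ} {s : Fin N → M}

lemma commute_partialProd (hs : IsBraidFamily s) (m : Fin (N + 1)) {j : Fin N}
    (hmj : (m : ℕ) < j) : Commute (partialProd s m) (s j) := by
  induction m using Fin.induction with
  | zero => simp
  | succ m ih =>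
    rw [val_succ] at hmj
    rw [partialProd_succ]
    exact (ih (by simp only [val_castSucc]; omega)).mul_left (hs.commute m j (by omega))

lemma semiconjBy_partialProd (hs : IsBraidFamily s) {i j : Fin N} (hij : (j : ℕ) = i + 1)
    (m : Fin (N + 1)) (hjm : (j : ℕ) < m) : SemiconjBy (partialProd s m) (s i) (s j) := by
  induction m using Fin.induction with
  | zero => simp at hjm
  | succ m ih =>
    rw [val_succ] at hjm
    rw [partialProd_succ]
    rcases Nat.lt_succ_iff_lt_or_eq.mp hjm with hjm | hjm
    · exact (ih hjm).mul_left (hs.commute i m (by omega)).symm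
    · obtain rfl : j = m := Fin.ext hjm
      have hj : j.castSucc = i.succ := Fin.ext hij
      have hcomm := hs.commute_partialProd i.castSucc (j := j) (by simp only [val_castSucc]; omega)
      rw [hj, partialProd_succ]
      calc partialProd s i.castSucc * s i * s j * s i
          = partialProd s i.castSucc * (s i * s j * s i) := by simp only [mul_assoc]
        _ = partialProd s i.castSucc * s j * (s i * s j) := by
          rw [hs.braid i j hij]; simp only [mul_assoc]
        _ = s j * (partialProd s i.castSucc * s i * s j) := by
          rw [hcomm.eq]; simp only [mul_assoc]

lemma semiconjBy_partialProd_sq (hs : IsBraidFamily s) {i : Fin N} (hi : (i : ℕ) = 0)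
    (j : Fin N) : SemiconjBy (partialProd s j.succ ^ 2) (s j) (s i) := by
  obtain ⟨m, hm⟩ := j
  induction m with
  | zero =>
    obtain rfl : i = ⟨0, hm⟩ := Fin.ext hi
    have hone : partialProd s (castSucc ⟨0, hm⟩) = 1 := partialProd_zero s
    rw [partialProd_succ, hone, one_mul]
    exact (Commute.refl _).pow_left 2
  | succ m ih =>
    let j : Fin N := ⟨m, by omega⟩
    let k : Fin N := ⟨m + 1, hm⟩
    change SemiconjBy (partialProd s k.succ ^ 2) (s k) (s i)
    have hbraid := hs.braid j k rfl
    have hcomm := hs.commute_partialProd j.castSucc (j := k) (by simp [j, k])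
    have hj : partialProd s j.succ = partialProd s j.castSucc * s j := partialProd_succ s j
    have hk : partialProd s k.succ = partialProd s j.succ * s k := partialProd_succ s k
    have hsq : partialProd s k.succ ^ 2 = partialProd s j.succ ^ 2 * (s k * s j) :=
      calc partialProd s k.succ ^ 2
          = partialProd s j.succ * (s k * partialProd s j.castSucc) * (s j * s k) := by
            rw [sq, hk]; nth_rewrite 2 [hj]; simp only [mul_assoc]
        _ = partialProd s j.succ * partialProd s j.castSucc * (s k * s j * s k) := by
            rw [← hcomm.eq]; simp only [mul_assoc]
        _ = partialProd s j.succ ^ 2 * (s k * s j) := by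
            rw [← hbraid, sq]; nth_rewrite 3 [hj]; simp only [mul_assoc]
    have hshift : SemiconjBy (s k * s j) (s k) (s j) := by
      rw [SemiconjBy, ← hbraid, mul_assoc]
    rw [hsq]
    exact (ih (by omega)).mul_left hshift

/-- A Coxeter element `s_0 s_1 ⋯ s_{N-1}`, conjugation by which shifts the generators. -/
abbrev coxeterElement (s : Fin N → M) : M :=
  partialProd s (last N)

lemma semiconjBy_coxeterElement_pow (hs : IsBraidFamily s) (a : ℕ) {i j : Fin N}
    (hij : (j : ℕ) = i + a) : SemiconjBy (coxeterElement s ^ a) (s i) (s j) := by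
  induction a generalizing j with
  | zero =>
    obtain rfl : j = i := Fin.ext hij
    simp
  | succ a ih =>
    let k : Fin N := ⟨i + a, by omega⟩
    rw [pow_succ']
    exact (hs.semiconjBy_partialProd (i := k) (by simp only [k]; omega) _ j.isLt).mul_left (ih rfl)

lemma commute_coxeterElement_pow (hs : IsBraidFamily s) (i : Fin N) :
    Commute (coxeterElement s ^ (N + 1)) (s i) := by
  have hN : 0 < N := i.pos
  let first : Fin N := ⟨0, hN⟩
  let final : Fin N := ⟨N - 1, by omega⟩
  have hup : SemiconjBy (coxeterElement s ^ (N - 1 - i)) (s i) (s final) :=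
    hs.semiconjBy_coxeterElement_pow _ (by simp only [final]; omega)
  have hwrap : SemiconjBy (coxeterElement s ^ 2) (s final) (s first) := by
    have hlast : final.succ = last N := Fin.ext (by simp only [final, val_succ, val_last]; omega)
    simpa only [hlast] using hs.semiconjBy_partialProd_sq (i := first) rfl final
  have hback : SemiconjBy (coxeterElement s ^ (i : ℕ)) (s first) (s i) :=
    hs.semiconjBy_coxeterElement_pow _ (by simp [first])
  have hpow : coxeterElement s ^ (N + 1) =
      coxeterElement s ^ (i : ℕ) * (coxeterElement s ^ 2 * coxeterElement s ^ (N - 1 - i)) := by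
    rw [← pow_add, ← pow_add]
    congr 1
    omega
  rw [hpow]
  exact hback.mul_left (hwrap.mul_left hup)

lemma dvd_coxeterElement_pow (hs : IsBraidFamily s) (i : Fin N) :
    s i ∣ coxeterElement s ^ (N + 1) := by
  obtain ⟨N, rfl⟩ : ∃ N', N = N' + 1 := Nat.exists_eq_succ_of_ne_zero i.pos.ne'
  have hback : SemiconjBy (coxeterElement s ^ (i : ℕ)) (s 0) (s i) :=
    hs.semiconjBy_coxeterElement_pow _ (by simp)
  have hpow : coxeterElement s ^ (N + 1 + 1) =
      coxeterElement s ^ (i : ℕ) * coxeterElement s * coxeterElement s ^ (N + 1 - i) := by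
    rw [← pow_succ, ← pow_add]
    congr 1
    omega
  have hcoxeter : coxeterElement s = s 0 * partialProd (tail s) (last N) := by
    simpa using partialProd_succ' s (last N)
  refine ⟨coxeterElement s ^ (i : ℕ) * partialProd (tail s) (last N) *
    coxeterElement s ^ (N + 1 - i), ?_⟩
  rw [hpow]
  nth_rewrite 2 [hcoxeter]
  rw [← mul_assoc, hback.eq]
  simp only [mul_assoc]

end IsBraidFamily

lemma exists_mul_pow_mem_mrange {M G : Type*} [Monoid M] [Group G] (f : M →* G) {S : Set M}
    (hS : Subgroup.closure (f '' S) = ⊤) {z : M} (hz : ∀ s ∈ S, Commute z s)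
    (hdvd : ∀ s ∈ S, s ∣ z) (g : G) : ∃ k : ℕ, g * f z ^ k ∈ MonoidHom.mrange f := by
  have hcentral (g : G) : Commute (f z) g := by
    have hg : g ∈ Subgroup.closure (f '' S) := hS ▸ Subgroup.mem_top g
    induction hg using Subgroup.closure_induction with
    | mem _ hx =>
      obtain ⟨s, hs, rfl⟩ := hx
      exact (hz s hs).map f
    | one => exact Commute.one_right _
    | mul _ _ _ _ hx hy => exact hx.mul_right hy
    | inv _ _ hx => exact hx.inv_right
  have hg : g ∈ Submonoid.closure (f '' S ∪ (f '' S)⁻¹) := by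
    rw [← Subgroup.closure_toSubmonoid, hS]
    trivial
  induction hg using Submonoid.closure_induction with
  | mem x hx =>
    rcases hx with ⟨s, _, rfl⟩ | ⟨s, hs, hsx⟩
    · exact ⟨0, s, by simp⟩
    · obtain ⟨c, rfl⟩ := hdvd s hs
      exact ⟨1, c, by simp [← inv_eq_iff_eq_inv.mpr hsx]⟩
  | one => exact ⟨0, 1, by simp⟩
  | mul x y _ _ hx hy =>
    obtain ⟨k, a, ha⟩ := hx
    obtain ⟨l, b, hb⟩ := hy
    refine ⟨k + l, a * b, ?_⟩
    rw [map_mul, ha, hb, pow_add, ← mul_assoc, ← mul_assoc, mul_assoc x,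
      ((hcentral y).pow_left k).eq, ← mul_assoc]

lemma BraidGroup.exists_mul_toBraidGroup_eq {n : ℕ} (g : BraidGroup n) :
    ∃ x y : BraidMonoid n,
      g * BraidMonoid.toBraidGroup n y = BraidMonoid.toBraidGroup n x := by
  have hgen : IsBraidFamily (BraidMonoid.gen (n := n)) := BraidMonoid.isBraidFamily_gen
  obtain ⟨k, x, hx⟩ := exists_mul_pow_mem_mrange (BraidMonoid.toBraidGroup n)
    (S := Set.range BraidMonoid.gen)
    (by rw [← Set.range_comp]; exact closure_range_gen n)
    (Set.forall_mem_range.mpr hgen.commute_coxeterElement_pow)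
    (Set.forall_mem_range.mpr hgen.dvd_coxeterElement_pow) g
  exact ⟨x, (IsBraidFamily.coxeterElement BraidMonoid.gen ^ (n - 1 + 1)) ^ k, by rw [map_pow, hx]⟩

/-! ### The Lawrence–Krammer operators -/

section Operators

variable {R S : Type*} [CommRing R] [CommRing S]

/-- Krammer's operator for `σ_k`. The value at `(i, j)`, where `i < j`, is Krammer's formula for
`σ_k x_{i,j}`, rescaled by `x_{i,j} ↦ q^i x_{i,j}` and with `g i j` written for `x_{i,j}`; so this
is the transpose of the operator on the span of the `x_{i,j}`. Values at `i ≥ j` are irrelevant: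
they never enter the values at `i < j`. -/
def krammerFun (q t : R) (k : ℕ) : Module.End R (ℕ → ℕ → R) where
  toFun g i j :=
    if i = k ∧ j = k + 1 then t * q ^ 2 * g k (k + 1)
    else if j = k then (1 - q) * g i k + q * g i (k + 1)
    else if j = k + 1 then g i k + t * q * (q - 1) * g k (k + 1)
    else if i = k then g (k + 1) j + t * q * (q - 1) * g k (k + 1)
    else if i = k + 1 then q * g k j + (1 - q) * g (k + 1) j
    else if i < k ∧ k + 1 < j then g i j + t * (q - 1) ^ 2 * g k (k + 1)
    else g i j
  map_add' g h := by
    funext i j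
    simp only [Pi.add_apply]
    split_ifs <;> ring
  map_smul' c g := by
    funext i j
    simp only [Pi.smul_apply, smul_eq_mul, RingHom.id_apply]
    split_ifs <;> ring

section Values

variable (q t : R) {k i j : ℕ} (g : ℕ → ℕ → R)

lemma krammerFun_self : krammerFun q t k g k (k + 1) = t * q ^ 2 * g k (k + 1) := by
  simp [krammerFun]

lemma krammerFun_right : krammerFun q t k g i k = (1 - q) * g i k + q * g i (k + 1) := by
  simp [krammerFun]

lemma krammerFun_right_succ (h : i < k) :
    krammerFun q t k g i (k + 1) = g i k + t * q * (q - 1) * g k (k + 1) := by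
  simp [krammerFun, h.ne]

lemma krammerFun_left (h : k + 1 < j) :
    krammerFun q t k g k j = g (k + 1) j + t * q * (q - 1) * g k (k + 1) := by
  simp [krammerFun, h.ne', show j ≠ k by omega]

lemma krammerFun_left_succ (h : k + 1 < j) :
    krammerFun q t k g (k + 1) j = q * g k j + (1 - q) * g (k + 1) j := by
  simp [krammerFun, h.ne', show j ≠ k by omega]

lemma krammerFun_of_nested (hi : i < k) (hj : k + 1 < j) :
    krammerFun q t k g i j = g i j + t * (q - 1) ^ 2 * g k (k + 1) := by
  simp [krammerFun, hi, hj, hi.ne, hj.ne', show j ≠ k by omega, show i ≠ k + 1 by omega]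

lemma krammerFun_of_disjoint (hij : i < j) (h : k + 1 < i ∨ j < k) :
    krammerFun q t k g i j = g i j := by
  simp only [krammerFun, LinearMap.coe_mk, AddHom.coe_mk]
  repeat' rw [if_neg (by omega)]

end Values

/-! In the next three proofs the pair `(i, j)` is located relative to the strings moved by the
operators; in each position the identity is one of polynomials in `q`, `t` and the values of `g`. -/

lemma krammerFun_comm (q t : R) {k l : ℕ} (hkl : k + 2 ≤ l) (g : ℕ → ℕ → R) {i j : ℕ}
    (hij : i < j) :
    krammerFun q t k (krammerFun q t l g) i j = krammerFun q t l (krammerFun q t k g) i j := by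
  have hi : i < k ∨ i = k ∨ i = k + 1 ∨ (k + 1 < i ∧ i < l) ∨ i = l ∨ i = l + 1 ∨ l + 1 < i := by
    omega
  have hj : j < k ∨ j = k ∨ j = k + 1 ∨ (k + 1 < j ∧ j < l) ∨ j = l ∨ j = l + 1 ∨ l + 1 < j := by
    omega
  rcases hi with hi | rfl | rfl | hi | rfl | rfl | hi <;>
  rcases hj with hj | rfl | rfl | hj | rfl | rfl | hj <;>
  first
  | omega
  | (simp (disch := omega) only [krammerFun_self, krammerFun_right, krammerFun_right_succ,
      krammerFun_left, krammerFun_left_succ, krammerFun_of_nested, krammerFun_of_disjoint]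
     try ring)

lemma krammerFun_braid (q t : R) (k : ℕ) (g : ℕ → ℕ → R) {i j : ℕ} (hij : i < j) :
    krammerFun q t k (krammerFun q t (k + 1) (krammerFun q t k g)) i j =
      krammerFun q t (k + 1) (krammerFun q t k (krammerFun q t (k + 1) g)) i j := by
  have hi : i < k ∨ i = k ∨ i = k + 1 ∨ i = k + 1 + 1 ∨ k + 1 + 1 < i := by omega
  have hj : j < k ∨ j = k ∨ j = k + 1 ∨ j = k + 1 + 1 ∨ k + 1 + 1 < j := by omega
  rcases hi with hi | rfl | rfl | rfl | hi <;>
  rcases hj with hj | rfl | rfl | rfl | hj <;>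
  first
  | omega
  | (simp (disch := omega) only [krammerFun_self, krammerFun_right, krammerFun_right_succ,
      krammerFun_left, krammerFun_left_succ, krammerFun_of_nested, krammerFun_of_disjoint]
     try ring)

/-- The expansion of `(σ_k - 1) (σ_k + q) (σ_k - t q²) = 0`. -/
lemma krammerFun_cubic (q t : R) (k : ℕ) (g : ℕ → ℕ → R) {i j : ℕ} (hij : i < j) :
    krammerFun q t k (krammerFun q t k (krammerFun q t k g)) i j =
      (1 - q + t * q ^ 2) * krammerFun q t k (krammerFun q t k g) i j +
        (q - (1 - q) * (t * q ^ 2)) * krammerFun q t k g i j - t * q ^ 3 * g i j := by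
  have hi : i < k ∨ i = k ∨ i = k + 1 ∨ k + 1 < i := by omega
  have hj : j < k ∨ j = k ∨ j = k + 1 ∨ k + 1 < j := by omega
  rcases hi with hi | rfl | rfl | hi <;>
  rcases hj with hj | rfl | rfl | hj <;>
  first
  | omega
  | (simp (disch := omega) only [krammerFun_self, krammerFun_right, krammerFun_right_succ,
      krammerFun_left, krammerFun_left_succ, krammerFun_of_nested, krammerFun_of_disjoint]
     try ring)

lemma krammerFun_congr (q t : R) {n k : ℕ} (hk : k + 1 < n) {g h : ℕ → ℕ → R}
    (hgh : ∀ i j, i < j → j < n → g i j = h i j) {i j : ℕ} (hij : i < j) (hj : j < n) :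
    krammerFun q t k g i j = krammerFun q t k h i j := by
  simp only [krammerFun, LinearMap.coe_mk, AddHom.coe_mk]
  split_ifs <;> (try subst_vars) <;> simp (disch := omega) only [hgh]

lemma map_krammerFun (φ : R →+* S) (q t : R) (k : ℕ) (g : ℕ → ℕ → R) (i j : ℕ) :
    φ (krammerFun q t k g i j) = krammerFun (φ q) (φ t) k (fun i j => φ (g i j)) i j := by
  simp only [krammerFun, LinearMap.coe_mk, AddHom.coe_mk]
  split_ifs <;> simp

/-- The set of pairs `i < j < n`, with `(i, j)` encoded as `⟨j, i⟩`. It indexes the basis of the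
Lawrence–Krammer representation of the braid group on `n` strings. -/
abbrev PositiveRoot (n : ℕ) : Type :=
  (j : Fin n) × Fin (j : ℕ)

lemma card_positiveRoot (n : ℕ) : Fintype.card (PositiveRoot n) = n * (n - 1) / 2 := by
  rw [Fintype.card_sigma]
  simp only [Fintype.card_fin]
  rw [Fin.sum_univ_eq_sum_range (fun i => i), Finset.sum_range_id]

/-- The restriction of a function of two natural numbers to the pairs `i < j < n`. -/
def restrict (n : ℕ) : (ℕ → ℕ → R) →ₗ[R] (PositiveRoot n → R) where
  toFun g p := g p.2 p.1
  map_add' _ _ := rfl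
  map_smul' _ _ := rfl

/-- The extension by zero of a function on the pairs `i < j < n`. -/
def extend (n : ℕ) : (PositiveRoot n → R) →ₗ[R] (ℕ → ℕ → R) where
  toFun f i j := if h : i < j ∧ j < n then f ⟨⟨j, h.2⟩, ⟨i, h.1⟩⟩ else 0
  map_add' f g := by
    funext i j
    simp only [Pi.add_apply]
    split_ifs <;> simp
  map_smul' c f := by
    funext i j
    simp only [Pi.smul_apply, RingHom.id_apply]
    split_ifs <;> simp

lemma extend_restrict {n i j : ℕ} (g : ℕ → ℕ → R) (hij : i < j) (hj : j < n) :
    extend n (restrict n g) i j = g i j := by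
  simp [extend, restrict, hij, hj]

lemma restrict_extend {n : ℕ} (f : PositiveRoot n → R) : restrict n (extend n f) = f := by
  funext ⟨j, i⟩
  simp [extend, restrict]

lemma restrict_surjective (n : ℕ) : Function.Surjective (restrict (R := R) n) := fun f =>
  ⟨extend n f, restrict_extend f⟩

lemma restrict_congr {n : ℕ} {g h : ℕ → ℕ → R} (hgh : ∀ i j, i < j → j < n → g i j = h i j) :
    restrict n g = restrict n h := by
  funext ⟨j, i⟩
  exact hgh i j i.isLt j.isLt

/-- Krammer's operator for `σ_k` on functions on the pairs `i < j < n`. -/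
def krammerEnd (n : ℕ) (q t : R) (k : ℕ) : Module.End R (PositiveRoot n → R) :=
  restrict n ∘ₗ krammerFun q t k ∘ₗ extend n

lemma krammerEnd_restrict (q t : R) {n k : ℕ} (hk : k + 1 < n) (g : ℕ → ℕ → R) :
    krammerEnd n q t k (restrict n g) = restrict n (krammerFun q t k g) :=
  restrict_congr fun _ _ hij hj =>
    krammerFun_congr q t hk (fun _ _ hij hj => extend_restrict g hij hj) hij hj

lemma isBraidFamily_krammerEnd (n : ℕ) (q t : R) :
    IsBraidFamily fun k : Fin (n - 1) => krammerEnd n q t k where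
  commute k l hkl := by
    refine LinearMap.ext fun f => ?_
    obtain ⟨g, rfl⟩ := restrict_surjective n f
    simp (disch := omega) only [Module.End.mul_apply, krammerEnd_restrict]
    exact restrict_congr fun i j hij _ => krammerFun_comm q t hkl g hij
  braid k l hkl := by
    refine LinearMap.ext fun f => ?_
    obtain ⟨g, rfl⟩ := restrict_surjective n f
    simp (disch := omega) only [Module.End.mul_apply, krammerEnd_restrict, hkl]
    exact restrict_congr fun i j hij _ => krammerFun_braid q t k g hij

lemma krammerEnd_cubic (q t : R) {n k : ℕ} (hk : k + 1 < n) :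
    krammerEnd n q t k * (krammerEnd n q t k * krammerEnd n q t k) =
      (1 - q + t * q ^ 2) • (krammerEnd n q t k * krammerEnd n q t k) +
        (q - (1 - q) * (t * q ^ 2)) • krammerEnd n q t k - (t * q ^ 3) • 1 := by
  refine LinearMap.ext fun f => ?_
  obtain ⟨g, rfl⟩ := restrict_surjective n f
  simp only [hk, Module.End.mul_apply, Module.End.one_apply, LinearMap.add_apply,
    LinearMap.sub_apply, LinearMap.smul_apply, krammerEnd_restrict]
  funext ⟨j, i⟩
  exact krammerFun_cubic q t k g i.isLt

lemma isUnit_krammerEnd {n k : ℕ} {q t : R} (hq : IsUnit q) (ht : IsUnit t) (hk : k + 1 < n) :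
    IsUnit (krammerEnd n q t k) := by
  set T := krammerEnd n q t k
  let A : Module.End R (PositiveRoot n → R) :=
    (1 - q + t * q ^ 2) • T + (q - (1 - q) * (t * q ^ 2)) • 1 - T * T
  have hTA : T * A = (t * q ^ 3) • 1 := by
    simp only [A, mul_sub, mul_add, mul_smul_comm, mul_one]
    rw [krammerEnd_cubic q t hk, sub_sub_cancel]
  have hcomm : Commute T A :=
    (((Commute.refl T).smul_right _).add_right ((Commute.one_right T).smul_right _)).sub_right
      ((Commute.refl T).mul_right (Commute.refl T))
  have hunit : IsUnit (T * A) := by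
    rw [hTA, ← Algebra.algebraMap_eq_smul_one]
    exact (ht.mul (hq.pow 3)).map (algebraMap R _)
  exact (hcomm.isUnit_mul_iff.mp hunit).1

lemma map_krammerEnd (φ : R →+* S) (n : ℕ) (q t : R) (k : ℕ) (f : PositiveRoot n → R) :
    φ ∘ krammerEnd n q t k f = krammerEnd n (φ q) (φ t) k (φ ∘ f) := by
  have hextend : (fun i j => φ (extend n f i j)) = extend n (φ ∘ f) := by
    funext i j
    simp only [extend, LinearMap.coe_mk, AddHom.coe_mk]
    split_ifs <;> simp
  funext ⟨j, i⟩
  simp only [krammerEnd, LinearMap.comp_apply, ← hextend]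
  exact map_krammerFun φ q t k (extend n f) i j

end Operators

/-! ### The Lawrence–Krammer representation -/

section Representation

variable {R S : Type*} [CommRing R] [CommRing S]

/-- The Lawrence–Krammer representation of the monoid of positive braids, defined for arbitrary
parameters `q` and `t`. -/
def krammerMonoidRep (n : ℕ) (q t : R) : BraidMonoid n →* Module.End R (PositiveRoot n → R) :=
  BraidMonoid.lift (isBraidFamily_krammerEnd n q t)

lemma krammerMonoidRep_mul_gen (n : ℕ) (q t : R) (x : BraidMonoid n) (k : Fin (n - 1))
    (f : PositiveRoot n → R) :
    krammerMonoidRep n q t (x * BraidMonoid.gen k) f =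
      krammerMonoidRep n q t x (krammerEnd n q t k f) := by
  simp [krammerMonoidRep]

lemma map_krammerMonoidRep (φ : R →+* S) (n : ℕ) (q t : R) (x : BraidMonoid n)
    (f : PositiveRoot n → R) :
    φ ∘ krammerMonoidRep n q t x f = krammerMonoidRep n (φ q) (φ t) x (φ ∘ f) := by
  induction x using BraidMonoid.induction_right generalizing f with
  | one => simp
  | mul_gen x k ih =>
    rw [krammerMonoidRep_mul_gen, krammerMonoidRep_mul_gen, ih, map_krammerEnd]

lemma krammerMonoidRep_eq_of_injective {φ : R →+* S} (hφ : Function.Injective φ) {n : ℕ} {q t : R}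
    {x y : BraidMonoid n}
    (h : krammerMonoidRep n (φ q) (φ t) x = krammerMonoidRep n (φ q) (φ t) y) :
    krammerMonoidRep n q t x = krammerMonoidRep n q t y := by
  refine LinearMap.ext fun f => hφ.comp_left ?_
  change φ ∘ krammerMonoidRep n q t x f = φ ∘ krammerMonoidRep n q t y f
  rw [map_krammerMonoidRep, map_krammerMonoidRep, h]

lemma krammerMonoidRep_eq_map (φ : R →+* S) {n : ℕ} {q t : R} {x y : BraidMonoid n}
    (h : krammerMonoidRep n q t x = krammerMonoidRep n q t y) :
    krammerMonoidRep n (φ q) (φ t) x = krammerMonoidRep n (φ q) (φ t) y := by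
  refine (Pi.basisFun S (PositiveRoot n)).ext fun p => ?_
  have hp : Pi.basisFun S (PositiveRoot n) p = φ ∘ Pi.single p 1 := by
    funext r
    simp [Pi.single_apply, apply_ite φ]
  rw [hp, ← map_krammerMonoidRep, ← map_krammerMonoidRep, h]

lemma isBraidFamily_krammerUnit (n : ℕ) (q t : Rˣ) :
    IsBraidFamily fun k : Fin (n - 1) =>
      (isUnit_krammerEnd (k := k) (n := n) q.isUnit t.isUnit (by omega)).unit where
  commute k l hkl := Units.ext ((isBraidFamily_krammerEnd n (q : R) t).commute k l hkl)
  braid k l hkl := Units.ext ((isBraidFamily_krammerEnd n (q : R) t).braid k l hkl)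

/-- The Lawrence–Krammer representation of the braid group on `n` strings. -/
noncomputable def krammerRep (n : ℕ) (q t : Rˣ) :
    BraidGroup n →* (Module.End R (PositiveRoot n → R))ˣ :=
  BraidGroup.lift (isBraidFamily_krammerUnit n q t)

lemma krammerRep_toBraidGroup (n : ℕ) (q t : Rˣ) (x : BraidMonoid n) :
    (krammerRep n q t (BraidMonoid.toBraidGroup n x) : Module.End R (PositiveRoot n → R)) =
      krammerMonoidRep n (q : R) t x := by
  induction x using BraidMonoid.induction_right with
  | one => simp
  | mul_gen x k ih =>
    rw [map_mul, map_mul, map_mul, Units.val_mul, ih]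
    simp [krammerRep, krammerMonoidRep, BraidMonoid.toBraidGroup]

end Representation

/-! ### Krammer's specialization at `t = 0` -/

section Specialization

/-- The basis vector `e_{a,b}` of the Lawrence–Krammer representation (zero unless `a < b < n`). -/
def rootVector (R : Type*) [CommRing R] (n a b : ℕ) : PositiveRoot n → R :=
  restrict n fun i j => if i = a ∧ j = b then 1 else 0

section Values

variable {R : Type*} [CommRing R] (q : R) {n k : ℕ}

lemma rootVector_ne_zero [Nontrivial R] {a b : ℕ} (hab : a < b) (hb : b < n) :
    rootVector R n a b ≠ 0 := by
  intro h
  simpa [rootVector, restrict] using congrFun h ⟨⟨b, hb⟩, ⟨a, hab⟩⟩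

lemma krammerEnd_rootVector_self (hk : k + 1 < n) :
    krammerEnd n q 0 k (rootVector R n k (k + 1)) = 0 := by
  rw [rootVector, krammerEnd_restrict q 0 hk, ← map_zero (restrict n)]
  refine restrict_congr fun i j _ _ => ?_
  simp only [krammerFun, LinearMap.coe_mk, AddHom.coe_mk, Pi.zero_apply]
  grind

lemma krammerEnd_rootVector_of_far {i : ℕ} (hk : k + 1 < n) (hik : i + 2 ≤ k ∨ k + 2 ≤ i) :
    krammerEnd n q 0 k (rootVector R n i (i + 1)) = rootVector R n i (i + 1) := by
  rw [rootVector, krammerEnd_restrict q 0 hk]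
  refine restrict_congr fun i j _ _ => ?_
  simp only [krammerFun, LinearMap.coe_mk, AddHom.coe_mk]
  grind

lemma krammerEnd_rootVector_succ (hk : k + 1 < n) :
    krammerEnd n q 0 k (rootVector R n (k + 1) (k + 2)) =
      rootVector R n k (k + 2) + (1 - q) • rootVector R n (k + 1) (k + 2) := by
  simp only [rootVector]
  rw [krammerEnd_restrict q 0 hk, ← map_smul, ← map_add]
  refine restrict_congr fun i j _ _ => ?_
  simp only [krammerFun, LinearMap.coe_mk, AddHom.coe_mk, Pi.add_apply, Pi.smul_apply, smul_eq_mul]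
  grind

lemma krammerEnd_succ_rootVector (hk : k + 2 < n) :
    krammerEnd n q 0 (k + 1) (rootVector R n k (k + 1)) =
      rootVector R n k (k + 2) + (1 - q) • rootVector R n k (k + 1) := by
  simp only [rootVector]
  rw [krammerEnd_restrict q 0 hk, ← map_smul, ← map_add]
  refine restrict_congr fun i j _ _ => ?_
  simp only [krammerFun, LinearMap.coe_mk, AddHom.coe_mk, Pi.add_apply, Pi.smul_apply, smul_eq_mul]
  grind

lemma krammerEnd_rootVector_add_two (hk : k + 1 < n) :
    krammerEnd n q 0 k (rootVector R n k (k + 2)) = q • rootVector R n (k + 1) (k + 2) := by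
  simp only [rootVector]
  rw [krammerEnd_restrict q 0 hk, ← map_smul]
  refine restrict_congr fun i j _ _ => ?_
  simp only [krammerFun, LinearMap.coe_mk, AddHom.coe_mk, Pi.smul_apply, smul_eq_mul]
  grind

lemma krammerEnd_succ_rootVector_add_two (hk : k + 2 < n) :
    krammerEnd n q 0 (k + 1) (rootVector R n k (k + 2)) = q • rootVector R n k (k + 1) := by
  simp only [rootVector]
  rw [krammerEnd_restrict q 0 hk, ← map_smul]
  refine restrict_congr fun i j _ _ => ?_
  simp only [krammerFun, LinearMap.coe_mk, AddHom.coe_mk, Pi.smul_apply, smul_eq_mul]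
  grind

lemma krammerMonoidRep_mul_gen_rootVector (x : BraidMonoid n) (k : Fin (n - 1)) :
    krammerMonoidRep n q 0 (x * BraidMonoid.gen k) (rootVector R n k (k + 1)) = 0 := by
  rw [krammerMonoidRep_mul_gen, krammerEnd_rootVector_self q (by omega), map_zero]

end Values

variable {K : Type*} [CommRing K] [LinearOrder K] [IsStrictOrderedRing K]

lemma rootVector_nonneg (n a b : ℕ) : 0 ≤ rootVector K n a b := by
  rintro ⟨j, i⟩
  simp only [rootVector, restrict, LinearMap.coe_mk, AddHom.coe_mk, Pi.zero_apply]
  split_ifs <;> simp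

lemma krammerEnd_nonneg {q : K} (hq0 : 0 ≤ q) (hq1 : q ≤ 1) (n k : ℕ) {f : PositiveRoot n → K}
    (hf : 0 ≤ f) : 0 ≤ krammerEnd n q 0 k f := by
  have hextend (i j : ℕ) : 0 ≤ extend n f i j := by
    simp only [extend, LinearMap.coe_mk, AddHom.coe_mk]
    split_ifs
    exacts [hf _, le_rfl]
  rintro ⟨j, i⟩
  simp only [krammerEnd, LinearMap.comp_apply, restrict, krammerFun, LinearMap.coe_mk,
    AddHom.coe_mk, Pi.zero_apply, zero_mul, add_zero]
  have hcoeff : 0 ≤ 1 - q := sub_nonneg.mpr hq1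
  split_ifs <;> first
    | exact le_rfl
    | exact hextend _ _
    | exact add_nonneg (mul_nonneg (by assumption) (hextend _ _))
        (mul_nonneg (by assumption) (hextend _ _))

variable {n : ℕ} {q : K}

lemma krammerMonoidRep_nonneg (hq0 : 0 ≤ q) (hq1 : q ≤ 1) (x : BraidMonoid n)
    {f : PositiveRoot n → K} (hf : 0 ≤ f) : 0 ≤ krammerMonoidRep n q 0 x f := by
  induction x using BraidMonoid.induction_right generalizing f with
  | one => simpa using hf
  | mul_gen x k ih =>
    rw [krammerMonoidRep_mul_gen]
    exact ih (krammerEnd_nonneg hq0 hq1 n k hf)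

lemma krammerMonoidRep_eq_zero_of_add_smul (hq0 : 0 ≤ q) (hq1 : q ≤ 1) (x : BraidMonoid n)
    {v w : PositiveRoot n → K} (hv : 0 ≤ v) (hw : 0 ≤ w) {c : K} (hc : 0 < c)
    (h : krammerMonoidRep n q 0 x (v + c • w) = 0) :
    krammerMonoidRep n q 0 x v = 0 ∧ krammerMonoidRep n q 0 x w = 0 := by
  rw [map_add, map_smul, add_eq_zero_iff_of_nonneg (krammerMonoidRep_nonneg hq0 hq1 x hv)
    (smul_nonneg hc.le (krammerMonoidRep_nonneg hq0 hq1 x hw))] at h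
  exact ⟨h.1, (smul_eq_zero.mp h.2).resolve_left hc.ne'⟩

/-- For adjacent `i` and `k`, the vector `v` is `e_{a,a+2}`, where `a` is the smaller of the two. -/
lemma exists_krammerEnd_rootVector_of_adjacent (q : K) {i k : Fin (n - 1)}
    (hik : (i : ℕ) = k + 1 ∨ (k : ℕ) = i + 1) :
    ∃ v : PositiveRoot n → K, 0 ≤ v ∧
      krammerEnd n q 0 k (rootVector K n i (i + 1)) =
        v + (1 - q) • rootVector K n i (i + 1) ∧
      krammerEnd n q 0 i v = q • rootVector K n k (k + 1) := by
  rcases hik with h | h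
  · refine ⟨rootVector K n k (k + 2), rootVector_nonneg _ _ _, ?_⟩
    rw [h]
    exact ⟨krammerEnd_rootVector_succ q (by omega), krammerEnd_succ_rootVector_add_two q (by omega)⟩
  · refine ⟨rootVector K n i (i + 2), rootVector_nonneg _ _ _, ?_⟩
    rw [h]
    exact ⟨krammerEnd_succ_rootVector q (by omega), krammerEnd_rootVector_add_two q (by omega)⟩

open BraidMonoid in
theorem exists_eq_mul_gen_of_krammerMonoidRep_rootVector_eq_zero (hq0 : 0 < q) (hq1 : q < 1)
    (x : BraidMonoid n) (i : Fin (n - 1))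
    (hx : krammerMonoidRep n q 0 x (rootVector K n i (i + 1)) = 0) : ∃ y, x = y * gen i := by
  have hgen : IsBraidFamily (gen (n := n)) := isBraidFamily_gen
  induction hl : length x using Nat.strong_induction_on generalizing x i with
  | _ l ih =>
  subst hl
  induction x using BraidMonoid.induction_right with
  | one => exact absurd hx (rootVector_ne_zero (by omega) (by omega))
  | mul_gen y k _ =>
    rw [length_mul_gen] at ih
    have hy := hx
    rw [krammerMonoidRep_mul_gen] at hy
    have hpos : i = k ∨ ((i : ℕ) + 2 ≤ k ∨ (k : ℕ) + 2 ≤ i) ∨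
        ((i : ℕ) = k + 1 ∨ (k : ℕ) = i + 1) := by
      rw [Fin.ext_iff]
      omega
    rcases hpos with rfl | hfar | hadj
    · exact ⟨y, rfl⟩
    · rw [krammerEnd_rootVector_of_far q (by omega) hfar] at hy
      obtain ⟨z, rfl⟩ := ih _ (Nat.lt_succ_self _) y i hy rfl
      have hcomm : Commute (gen i) (gen k) :=
        hfar.elim (hgen.commute i k) fun h => (hgen.commute k i h).symm
      exact ⟨z * gen k, by rw [mul_assoc, hcomm.eq, mul_assoc]⟩
    · obtain ⟨v, hv, hki, hiv⟩ := exists_krammerEnd_rootVector_of_adjacent q hadj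
      rw [hki] at hy
      obtain ⟨hyv, hyi⟩ := krammerMonoidRep_eq_zero_of_add_smul hq0.le hq1.le y hv
        (rootVector_nonneg _ _ _) (sub_pos.mpr hq1) hy
      obtain ⟨z, rfl⟩ := ih _ (Nat.lt_succ_self _) y i hyi rfl
      rw [krammerMonoidRep_mul_gen, hiv, map_smul] at hyv
      obtain ⟨w, rfl⟩ := ih (length z) (by rw [length_mul_gen]; omega) z k
        ((smul_eq_zero.mp hyv).resolve_left hq0.ne') rfl
      have hbraid : gen k * gen i * gen k = gen i * gen k * gen i :=
        hadj.elim (hgen.braid k i) fun h => (hgen.braid i k h).symm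
      exact ⟨w * gen i * gen k, by simpa only [mul_assoc] using congrArg (w * ·) hbraid⟩

end Specialization

/-! ### Faithfulness -/

section Faithful

variable {n : ℕ}

open BraidMonoid in
theorem BraidMonoid.injective_of_krammerMonoidRep_eq {K : Type*} [CommRing K] [LinearOrder K]
    [IsStrictOrderedRing K] {q : K} (hq0 : 0 < q) (hq1 : q < 1) {G : Type*} [Mul G]
    [IsRightCancelMul G] (f : BraidMonoid n →ₙ* G)
    (hf : ∀ x y, f x = f y → krammerMonoidRep n q 0 x = krammerMonoidRep n q 0 y) :
    Function.Injective f := by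
  intro x y hxy
  induction x using BraidMonoid.induction_right generalizing y with
  | one =>
    cases y using BraidMonoid.induction_right with
    | one => rfl
    | mul_gen y k =>
      have hzero := krammerMonoidRep_mul_gen_rootVector q y k
      rw [← hf _ _ hxy, map_one, Module.End.one_apply] at hzero
      exact absurd hzero (rootVector_ne_zero (by omega) (by omega))
  | mul_gen x k ih =>
    have hzero := krammerMonoidRep_mul_gen_rootVector q x k
    rw [hf _ _ hxy] at hzero
    obtain ⟨z, rfl⟩ :=
      exists_eq_mul_gen_of_krammerMonoidRep_rootVector_eq_zero hq0 hq1 y k hzero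
    rw [map_mul, map_mul] at hxy
    rw [ih (mul_right_cancel hxy)]

/-- In the application `P` is `ℤ[q, t]`, where `t` can be sent to `0` although its image in `R` is
invertible. -/
theorem krammerRep_injective {P R K : Type*} [CommRing P] [CommRing R] [CommRing K] [LinearOrder K]
    [IsStrictOrderedRing K] {ι : P →+* R} (hι : Function.Injective ι) (π : P →+* K) {q t : P}
    (hq0 : 0 < π q) (hq1 : π q < 1) (ht : π t = 0) {q' t' : Rˣ} (hq' : ι q = q') (ht' : ι t = t') :
    Function.Injective (krammerRep n q' t') := by
  have hinj : Function.Injective ((krammerRep n q' t').comp (BraidMonoid.toBraidGroup n)) := by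
    refine BraidMonoid.injective_of_krammerMonoidRep_eq hq0 hq1
      ((krammerRep n q' t').comp (BraidMonoid.toBraidGroup n)).toMulHom fun x y hxy => ?_
    have hR : krammerMonoidRep n (ι q) (ι t) x = krammerMonoidRep n (ι q) (ι t) y := by
      rw [hq', ht', ← krammerRep_toBraidGroup, ← krammerRep_toBraidGroup]
      exact congrArg Units.val hxy
    exact ht ▸ krammerMonoidRep_eq_map π (krammerMonoidRep_eq_of_injective hι hR)
  rw [injective_iff_map_eq_one]
  intro g hg
  obtain ⟨x, y, hxy⟩ := g.exists_mul_toBraidGroup_eq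
  have hyx : y = x := hinj <| by
    simp only [MonoidHom.comp_apply]
    rw [← hxy, map_mul, hg, one_mul]
  rwa [hyx, mul_eq_right] at hxy

open MvPolynomial in
theorem krammerRep_injective_of_algebraicIndependent {R : Type*} [CommRing R] {q t : Rˣ}
    (hqt : AlgebraicIndependent ℤ ![(q : R), (t : R)]) :
    Function.Injective (krammerRep n q t) :=
  krammerRep_injective (q := X 0) (t := X 1)
    (ι := (aeval (R := ℤ) ![(q : R), (t : R)]).toRingHom) hqt
    (eval₂Hom (Int.castRingHom ℚ) ![1 / 2, 0])
    (by norm_num) (by norm_num) (by simp) (by simp) (by simp)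

end Faithful

/-- The identification of automorphisms of a free module with invertible matrices, for a basis
numbered by `Fin m`. -/
noncomputable def unitsEndEquivGL {ι : Type*} [Fintype ι] [DecidableEq ι] {m : ℕ}
    (hm : Fintype.card ι = m) (R : Type*) [CommRing R] :
    (Module.End R (ι → R))ˣ ≃* Matrix.GeneralLinearGroup (Fin m) R :=
  Units.mapEquiv (LinearMap.toMatrixAlgEquiv'.trans
    (Matrix.reindexAlgEquiv R R (Fintype.equivFinOfCardEq hm))).toMulEquiv

theorem stmt_5_general {R : Type*} [CommRing R] {q t : Rˣ}
    (hqt : AlgebraicIndependent ℤ ![(q : R), (t : R)]) (n : ℕ) :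
    ∃ φ : BraidGroup n →* Matrix.GeneralLinearGroup (Fin (n * (n - 1) / 2)) R,
      Function.Injective φ :=
  let e := unitsEndEquivGL (card_positiveRoot n) R
  ⟨e.toMonoidHom.comp (krammerRep n q t),
    e.injective.comp (krammerRep_injective_of_algebraicIndependent hqt)⟩

/-! ### Laurent polynomials -/

lemma algebraicIndependent_single {σ R A : Type*} [CommRing R] [AddCommMonoid A] {a : σ → A}
    (ha : LinearIndependent ℕ a) :
    AlgebraicIndependent R fun i => AddMonoidAlgebra.single (a i) (1 : R) := by
  let e : (σ →₀ ℕ) →+ A := (Finsupp.linearCombination ℕ a).toAddMonoidHom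
  have haeval : MvPolynomial.aeval (fun i => AddMonoidAlgebra.single (a i) (1 : R)) =
      AddMonoidAlgebra.mapDomainAlgHom R R e :=
    MvPolynomial.algHom_ext fun i => by
      rw [MvPolynomial.aeval_X]
      simp [MvPolynomial.X, MvPolynomial.monomial, e]
  rw [algebraicIndependent_iff_injective_aeval, haeval]
  exact AddMonoidAlgebra.mapDomain_injective ha

/-- The monomial `q^{a.1} t^{a.2}`, as a unit of the ring of Laurent polynomials. -/
noncomputable def laurentMonomial (a : ℤ × ℤ) : (AddMonoidAlgebra ℤ (ℤ × ℤ))ˣ :=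
  (AddMonoidAlgebra.of ℤ (ℤ × ℤ)).toHomUnits (.ofAdd a)

lemma algebraicIndependent_laurentMonomial :
    AlgebraicIndependent ℤ
      ![(laurentMonomial (1, 0) : AddMonoidAlgebra ℤ (ℤ × ℤ)), laurentMonomial (0, 1)] := by
  have hbasis : LinearIndependent ℕ (Module.Basis.finTwoProd ℤ) :=
    (Module.Basis.finTwoProd ℤ).linearIndependent.restrict_scalars' ℕ
  convert algebraicIndependent_single (R := ℤ) hbasis using 1
  · funext i
    fin_cases i <;> simp [laurentMonomial]

/-- **Bigelow.** For every `n ≥ 2`, the braid group `B_n` embeds into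
`GL(n(n-1)/2, ℤ[q^{±1}, t^{±1}])`. -/
theorem stmt_5 (n : ℕ) (hn : 2 ≤ n) :
    ∃ φ : BraidGroup n →* Matrix.GeneralLinearGroup (Fin (n * (n - 1) / 2)) LaurentPoly2,
      Function.Injective φ :=
  stmt_5_general (R := AddMonoidAlgebra ℤ (ℤ × ℤ)) algebraicIndependent_laurentMonomial n
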